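/- Let n ≥ 1. For every Borel probability measure ρ on ℝⁿ, the prescription ⟨φ, (ρ ∗ M_κ)(B) ψ⟩ = ∫_B ∫_{ℝⁿ} conj(φ(x − q)) ψ(x − q) dρ(q) dx (for φ, ψ ∈ L²(ℝⁿ), Borel B ⊆ ℝⁿ) defines a POVM on (ℝⁿ, ℬ(ℝⁿ)) acting on L²(ℝⁿ) which is covariant under position translations (U(q)(ρ∗M_κ)(B)U(q)* = (ρ∗M_κ)(B+q)) and invariant under momentum boosts (V(p)(ρ∗M_κ)(B)V(p)* = (ρ∗M_κ)(B)). Moreover, the map ρ ↦ ρ ∗ M_κ is an affine bijection from the set of Borel probability measures on ℝⁿ onto the set 𝔏(ℝⁿ) of all translation-covariant, boost-invariant POVMs on (ℝⁿ, ℬ(ℝⁿ)) acting on L²(ℝⁿ). -/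

import Mathlib

open MeasureTheory Set
open scoped ComplexConjugate

local notation "⟪" x ", " y "⟫" => @inner ℂ _ _ x y

/-- A normalized positive operator valued measure (POVM). -/
structure POVM (Ω : Type*) [MeasurableSpace Ω] (H : Type*) [NormedAddCommGroup H]
    [InnerProductSpace ℂ H] [CompleteSpace H] where
  toFun : Set Ω → (H →L[ℂ] H)
  isPositive : ∀ B : Set Ω, MeasurableSet B → (toFun B).IsPositive
  normalized : toFun Set.univ = 1
  m_iUnion : ∀ B : ℕ → Set Ω, (∀ k, MeasurableSet (B k)) →
    Pairwise (Function.onFun Disjoint B) → ∀ φ ψ : H,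
      HasSum (fun k => ⟪φ, toFun (B k) ψ⟫) ⟪φ, toFun (⋃ k, B k) ψ⟫

/-- `L²(ℝⁿ)`. -/
noncomputable abbrev L2Rn (n : ℕ) : Type := Lp ℂ 2 (volume : Measure (Fin n → ℝ))

/-- Covariance under position translations: `U(q) M(B) U(q)* = M(B + q)`. -/
def TransCovariant (n : ℕ) (U : (Fin n → ℝ) → (L2Rn n ≃ₗᵢ[ℂ] L2Rn n))
    (M : POVM (Fin n → ℝ) (L2Rn n)) : Prop :=
  ∀ q : Fin n → ℝ, ∀ B : Set (Fin n → ℝ), MeasurableSet B →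
    ∀ φ ψ : L2Rn n,
      ⟪(U q φ : L2Rn n), M.toFun ((fun x => x + q) '' B) (U q ψ)⟫ = ⟪φ, M.toFun B ψ⟫

/-- Invariance under momentum boosts: `V(p) M(B) V(p)* = M(B)`. -/
def BoostInvariant (n : ℕ) (V : (Fin n → ℝ) → (L2Rn n ≃ₗᵢ[ℂ] L2Rn n))
    (M : POVM (Fin n → ℝ) (L2Rn n)) : Prop :=
  ∀ p : Fin n → ℝ, ∀ B : Set (Fin n → ℝ), MeasurableSet B →
    ∀ φ ψ : L2Rn n,
      ⟪(V p φ : L2Rn n), M.toFun B (V p ψ)⟫ = ⟪φ, M.toFun B ψ⟫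


/-- `M` is the convolution `ρ ∗ M_κ` of the probability measure `ρ` with the canonical
position observable, expressed through matrix elements. -/
def ConvRel (n : ℕ) (ρ : Measure (Fin n → ℝ)) (M : POVM (Fin n → ℝ) (L2Rn n)) : Prop :=
  ∀ B : Set (Fin n → ℝ), MeasurableSet B → ∀ φ ψ : L2Rn n,
    ⟪φ, M.toFun B ψ⟫ = ∫ x in B, (∫ q, conj (φ (x - q)) * ψ (x - q) ∂ρ)


section aux
variable {n : ℕ}

theorem memLp_mul_aux (m : (Fin n → ℝ) → ℝ) (hm : Measurable m) (hb : ∀ x, ‖m x‖ ≤ 1)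
    (φ : L2Rn n) : MemLp (fun x => (m x : ℂ) * φ x) 2 volume := by
  refine (Lp.memLp φ).mono ?_ ?_
  · exact ((Complex.measurable_ofReal.comp hm).mul
      (Lp.stronglyMeasurable φ).measurable).aestronglyMeasurable
  · refine Filter.Eventually.of_forall fun x => ?_
    rw [norm_mul, Complex.norm_real]
    exact mul_le_of_le_one_left (norm_nonneg _) (hb x)

noncomputable def mulOp (m : (Fin n → ℝ) → ℝ) (hm : Measurable m) (hb : ∀ x, ‖m x‖ ≤ 1) :
    L2Rn n →L[ℂ] L2Rn n :=
  LinearMap.mkContinuous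
    { toFun := fun φ => (memLp_mul_aux m hm hb φ).toLp _
      map_add' := by
        intro φ ψ
        rw [← MemLp.toLp_add, MemLp.toLp_eq_toLp_iff]
        filter_upwards [Lp.coeFn_add φ ψ] with x hx
        simp only [Pi.add_apply] at hx ⊢
        rw [hx, mul_add]
      map_smul' := by
        intro c φ
        simp only [RingHom.id_apply]
        rw [← MemLp.toLp_const_smul, MemLp.toLp_eq_toLp_iff]
        filter_upwards [Lp.coeFn_smul c φ] with x hx
        simp only [Pi.smul_apply, smul_eq_mul] at hx ⊢
        rw [hx]; ring } 1
    (by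
      intro φ
      rw [one_mul]
      refine Lp.norm_le_norm_of_ae_le ?_
      filter_upwards [(memLp_mul_aux m hm hb φ).coeFn_toLp] with x hx
      simp only [LinearMap.coe_mk, AddHom.coe_mk]
      rw [hx, norm_mul, Complex.norm_real]
      exact mul_le_of_le_one_left (norm_nonneg _) (hb x))

theorem mulOp_coe (m : (Fin n → ℝ) → ℝ) (hm : Measurable m) (hb : ∀ x, ‖m x‖ ≤ 1)
    (φ : L2Rn n) : (mulOp m hm hb φ : (Fin n → ℝ) → ℂ) =ᵐ[volume] fun x => (m x : ℂ) * φ x :=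
  (memLp_mul_aux m hm hb φ).coeFn_toLp

theorem inner_mulOp (m : (Fin n → ℝ) → ℝ) (hm : Measurable m) (hb : ∀ x, ‖m x‖ ≤ 1)
    (φ ψ : L2Rn n) :
    ⟪φ, mulOp m hm hb ψ⟫ = ∫ x, (m x : ℂ) * (conj (φ x) * ψ x) := by
  rw [L2.inner_def]
  refine integral_congr_ae ?_
  filter_upwards [mulOp_coe m hm hb ψ] with x hx
  rw [hx, RCLike.inner_apply]; ring

noncomputable def kern (ρ : Measure (Fin n → ℝ)) (B : Set (Fin n → ℝ)) (y : Fin n → ℝ) : ℝ :=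
  ρ.real ((fun q => y + q) ⁻¹' B)

theorem kern_measurable (ρ : Measure (Fin n → ℝ)) [IsProbabilityMeasure ρ]
    {B : Set (Fin n → ℝ)} (hB : MeasurableSet B) : Measurable (kern ρ B) := by
  have : MeasurableSet ((fun p : (Fin n → ℝ) × (Fin n → ℝ) => p.1 + p.2) ⁻¹' B) :=
    measurable_add hB
  exact (measurable_measure_prodMk_left (ν := ρ) this).ennreal_toReal

theorem kern_bound (ρ : Measure (Fin n → ℝ)) [IsProbabilityMeasure ρ]
    (B : Set (Fin n → ℝ)) (y : Fin n → ℝ) : ‖kern ρ B y‖ ≤ 1 := by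
  unfold kern
  rw [Real.norm_of_nonneg measureReal_nonneg]
  exact measureReal_le_one

open Classical in
noncomputable def convOp (ρ : Measure (Fin n → ℝ)) [IsProbabilityMeasure ρ]
    (B : Set (Fin n → ℝ)) : L2Rn n →L[ℂ] L2Rn n :=
  if h : MeasurableSet B then mulOp (kern ρ B) (kern_measurable ρ h) (kern_bound ρ B) else 0

theorem inner_convOp (ρ : Measure (Fin n → ℝ)) [IsProbabilityMeasure ρ]
    {B : Set (Fin n → ℝ)} (hB : MeasurableSet B) (φ ψ : L2Rn n) :
    ⟪φ, convOp ρ B ψ⟫ = ∫ x, (kern ρ B x : ℂ) * (conj (φ x) * ψ x) := by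
  rw [convOp, dif_pos hB, inner_mulOp]

theorem mp_shift (ρ : Measure (Fin n → ℝ)) [IsProbabilityMeasure ρ] :
    MeasurePreserving (fun p : (Fin n → ℝ) × (Fin n → ℝ) => (p.1, p.2 - p.1))
      (ρ.prod volume) (ρ.prod volume) := by
  refine MeasurePreserving.skew_product (g := fun q x => x - q) (MeasurePreserving.id ρ)
    (measurable_snd.sub measurable_fst) ?_
  exact Filter.Eventually.of_forall fun q => (measurePreserving_sub_right volume q).map_eq

theorem integrable_shift (ρ : Measure (Fin n → ℝ)) [IsProbabilityMeasure ρ]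
    {F : (Fin n → ℝ) → ℂ} (hF : Integrable F volume) :
    Integrable (fun p : (Fin n → ℝ) × (Fin n → ℝ) => F (p.2 - p.1)) (ρ.prod volume) := by
  have h1 : Integrable (fun p : (Fin n → ℝ) × (Fin n → ℝ) => F p.2) (ρ.prod volume) := hF.comp_snd ρ
  exact (mp_shift ρ).integrable_comp_of_integrable h1

theorem fubini_aux (ρ : Measure (Fin n → ℝ)) [IsProbabilityMeasure ρ]
    {F : (Fin n → ℝ) → ℂ} (hF : Integrable F volume)
    {B : Set (Fin n → ℝ)} (hB : MeasurableSet B) :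
    ∫ x in B, (∫ q, F (x - q) ∂ρ) = ∫ y, (kern ρ B y : ℂ) * F y := by
  have hS : MeasurableSet ((fun p : (Fin n → ℝ) × (Fin n → ℝ) => p.2 + p.1) ⁻¹' B) :=
    (measurable_snd.add measurable_fst) hB
  have hS' : MeasurableSet ((fun p : (Fin n → ℝ) × (Fin n → ℝ) => p.2) ⁻¹' B) :=
    measurable_snd hB
  set H : (Fin n → ℝ) × (Fin n → ℝ) → ℂ :=
    ((fun p : (Fin n → ℝ) × (Fin n → ℝ) => p.2 + p.1) ⁻¹' B).indicator (fun p => F p.2) with hH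
  have hHi : Integrable H (ρ.prod volume) := (hF.comp_snd ρ).indicator hS
  set G : (Fin n → ℝ) × (Fin n → ℝ) → ℂ :=
    ((fun p : (Fin n → ℝ) × (Fin n → ℝ) => p.2) ⁻¹' B).indicator (fun p => F (p.2 - p.1)) with hG
  have hGi : Integrable G (ρ.prod volume) := (integrable_shift ρ hF).indicator hS'
  have hGH : ∀ p, G p = H (p.1, p.2 - p.1) := by
    intro p
    by_cases h : p.2 ∈ B
    · rw [hG, hH, indicator_of_mem (by simpa using h), indicator_of_mem (by simpa using h)]
    · rw [hG, hH, indicator_of_notMem (by simpa using h), indicator_of_notMem (by simpa using h)]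
  have e1 : ∫ x in B, (∫ q, F (x - q) ∂ρ) = ∫ p, G p ∂(ρ.prod volume) := by
    rw [integral_prod_symm _ hGi, ← integral_indicator hB]
    congr 1
    ext x
    by_cases hx : x ∈ B <;> simp [hG, hx, indicator]
  have e2 : ∫ p, G p ∂(ρ.prod volume) = ∫ p, H p ∂(ρ.prod volume) := by
    simp_rw [hGH]
    have := integral_map (μ := ρ.prod volume) (mp_shift ρ).measurable.aemeasurable
      (f := H) (by rw [(mp_shift ρ).map_eq]; exact hHi.1)
    rw [(mp_shift ρ).map_eq] at this
    exact this.symm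
  rw [e1, e2, integral_prod_symm _ hHi]
  congr 1
  ext y
  have : (fun q => H (q, y)) = ((fun q => y + q) ⁻¹' B).indicator (fun _ => F y) := by
    ext q
    by_cases h : y + q ∈ B
    · rw [hH, indicator_of_mem (by simpa using h), indicator_of_mem (by simpa using h)]
    · rw [hH, indicator_of_notMem (by simpa using h), indicator_of_notMem (by simpa using h)]
  rw [this, integral_indicator (measurable_const_add y hB), setIntegral_const]
  simp [kern]

theorem integrable_conj_mul (φ ψ : L2Rn n) :
    Integrable (fun x => conj (φ x) * ψ x) volume := by
  refine (L2.integrable_inner (𝕜 := ℂ) φ ψ).congr (Filter.Eventually.of_forall fun x => ?_)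
  simp [RCLike.inner_apply, mul_comm]

theorem convOp_rel (ρ : Measure (Fin n → ℝ)) [IsProbabilityMeasure ρ]
    {B : Set (Fin n → ℝ)} (hB : MeasurableSet B) (φ ψ : L2Rn n) :
    ⟪φ, convOp ρ B ψ⟫ = ∫ x in B, (∫ q, conj (φ (x - q)) * ψ (x - q) ∂ρ) := by
  rw [inner_convOp ρ hB, fubini_aux ρ (integrable_conj_mul φ ψ) hB]

theorem clm_ext {S T : L2Rn n →L[ℂ] L2Rn n} (h : ∀ φ ψ, ⟪φ, S ψ⟫ = ⟪φ, T ψ⟫) : S = T := by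
  ext1 ψ
  exact ext_inner_left ℂ fun φ => h φ ψ

theorem clm_ext_diag {S T : L2Rn n →L[ℂ] L2Rn n} (h : ∀ φ, ⟪φ, S φ⟫ = ⟪φ, T φ⟫) : S = T := by
  have := (ext_inner_map (S : L2Rn n →ₗ[ℂ] L2Rn n) (T : L2Rn n →ₗ[ℂ] L2Rn n)).1 (fun x => by
    have := congrArg conj (h x)
    simpa [inner_conj_symm] using this)
  exact ContinuousLinearMap.coe_injective this

theorem convRel_iff (ρ : Measure (Fin n → ℝ)) [IsProbabilityMeasure ρ]
    (M : POVM (Fin n → ℝ) (L2Rn n)) :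
    ConvRel n ρ M ↔ ∀ B, MeasurableSet B → M.toFun B = convOp ρ B := by
  constructor
  · intro h B hB
    exact clm_ext fun φ ψ => by rw [h B hB, convOp_rel ρ hB]
  · intro h B hB φ ψ
    rw [h B hB, convOp_rel ρ hB]

theorem convOp_pos (ρ : Measure (Fin n → ℝ)) [IsProbabilityMeasure ρ]
    {B : Set (Fin n → ℝ)} (hB : MeasurableSet B) : (convOp ρ B).IsPositive := by
  rw [ContinuousLinearMap.isPositive_iff_complex]
  intro φ
  have key : ⟪convOp ρ B φ, φ⟫ = ((∫ x, kern ρ B x * ‖φ x‖ ^ 2 : ℝ) : ℂ) := by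
    rw [← inner_conj_symm, inner_convOp ρ hB, ← integral_conj, ← integral_complex_ofReal]
    congr 1
    ext x
    simp only [map_mul, Complex.conj_ofReal, Complex.conj_conj]
    rw [Complex.mul_conj']
    push_cast; rfl
  rw [key]
  refine ⟨by simp, ?_⟩
  simp only [Complex.ofReal_re, RCLike.re_to_complex]
  exact integral_nonneg fun x => mul_nonneg measureReal_nonneg (sq_nonneg _)

noncomputable def convPOVM (ρ : Measure (Fin n → ℝ)) [IsProbabilityMeasure ρ] :
    POVM (Fin n → ℝ) (L2Rn n) where
  toFun := convOp ρ
  isPositive := fun B hB => convOp_pos ρ hB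
  normalized := by
    refine clm_ext fun φ ψ => ?_
    rw [inner_convOp ρ MeasurableSet.univ]
    simp [kern, L2.inner_def, mul_comm]
  m_iUnion := by
    intro B hB hd φ ψ
    simp_rw [convOp_rel ρ (MeasurableSet.iUnion hB), convOp_rel ρ (hB _)]
    refine hasSum_integral_iUnion hB hd ?_
    exact (integrable_shift ρ (integrable_conj_mul φ ψ)).integral_prod_right.integrableOn

theorem convPOVM_boost (ρ : Measure (Fin n → ℝ)) [IsProbabilityMeasure ρ]
    (V : (Fin n → ℝ) → (L2Rn n ≃ₗᵢ[ℂ] L2Rn n))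
    (hV : ∀ p : Fin n → ℝ, ∀ φ : L2Rn n,
      (V p φ : (Fin n → ℝ) → ℂ) =ᵐ[volume]
        fun x => Complex.exp (Complex.I * (∑ k, p k * x k)) * φ x) :
    BoostInvariant n V (convPOVM ρ) := by
  intro p B hB φ ψ
  change ⟪V p φ, convOp ρ B (V p ψ)⟫ = ⟪φ, convOp ρ B ψ⟫
  rw [inner_convOp ρ hB, inner_convOp ρ hB]
  refine integral_congr_ae ?_
  filter_upwards [hV p φ, hV p ψ] with x h1 h2
  rw [h1, h2]
  have : conj (Complex.exp (Complex.I * (∑ k, p k * x k))) *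
      Complex.exp (Complex.I * (∑ k, p k * x k)) = 1 := by
    rw [mul_comm, Complex.mul_conj']
    have := Complex.norm_exp_I_mul_ofReal (∑ k, p k * x k)
    rw [this]; simp
  rw [map_mul]
  linear_combination (kern ρ B x : ℂ) * conj (φ x) * ψ x * this

theorem convPOVM_trans (ρ : Measure (Fin n → ℝ)) [IsProbabilityMeasure ρ]
    (U : (Fin n → ℝ) → (L2Rn n ≃ₗᵢ[ℂ] L2Rn n))
    (hU : ∀ q : Fin n → ℝ, ∀ φ : L2Rn n,
      (U q φ : (Fin n → ℝ) → ℂ) =ᵐ[volume] fun x => φ (x - q)) :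
    TransCovariant n U (convPOVM ρ) := by
  intro q B hB φ ψ
  change ⟪U q φ, convOp ρ ((fun x => x + q) '' B) (U q ψ)⟫ = ⟪φ, convOp ρ B ψ⟫
  have hB' : MeasurableSet ((fun x => x + q) '' B) :=
    (measurableEmbedding_addRight q).measurableSet_image.2 hB
  rw [inner_convOp ρ hB, inner_convOp ρ hB']
  rw [← integral_sub_right_eq_self (fun x => (kern ρ B x : ℂ) * (conj (φ x) * ψ x)) q]
  refine integral_congr_ae ?_
  filter_upwards [hU q φ, hU q ψ] with x h1 h2
  rw [h1, h2]
  have : (fun y => x + y) ⁻¹' ((fun x => x + q) '' B) = (fun y => (x - q) + y) ⁻¹' B := ?_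
  · simp only [kern, this]
  ext y
  simp only [mem_preimage, mem_image]
  constructor
  · rintro ⟨z, hz, h⟩
    have : x - q + y = z := by rw [sub_add_eq_add_sub, ← h]; simp
    rwa [this]
  · intro h
    exact ⟨_, h, by abel⟩

theorem conv_affine (ρ₁ ρ₂ : Measure (Fin n → ℝ)) [IsProbabilityMeasure ρ₁]
    [IsProbabilityMeasure ρ₂]
    (M₁ M₂ : POVM (Fin n → ℝ) (L2Rn n)) (h₁ : ConvRel n ρ₁ M₁) (h₂ : ConvRel n ρ₂ M₂)
    (t : ℝ) (h0 : 0 ≤ t) (h1 : t ≤ 1) (N : POVM (Fin n → ℝ) (L2Rn n))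
    (hN : ∀ B : Set (Fin n → ℝ), MeasurableSet B →
          N.toFun B = (t : ℂ) • M₁.toFun B + ((1 - t : ℝ) : ℂ) • M₂.toFun B) :
    ConvRel n (ENNReal.ofReal t • ρ₁ + ENNReal.ofReal (1 - t) • ρ₂) N := by
  have hp : IsProbabilityMeasure (ENNReal.ofReal t • ρ₁ + ENNReal.ofReal (1 - t) • ρ₂) := by
    constructor
    simp only [Measure.coe_add, Measure.coe_smul, Pi.add_apply, Pi.smul_apply, measure_univ,
      smul_eq_mul, mul_one]
    rw [← ENNReal.ofReal_add h0 (by linarith)]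
    simp
  rw [convRel_iff] at *
  intro B hB
  rw [hN B hB, h₁ B hB, h₂ B hB]
  refine clm_ext fun φ ψ => ?_
  have hk : ∀ x, kern (ENNReal.ofReal t • ρ₁ + ENNReal.ofReal (1 - t) • ρ₂) B x
      = t * kern ρ₁ B x + (1 - t) * kern ρ₂ B x := by
    intro x
    unfold kern
    have ha : (ENNReal.ofReal t • ρ₁) ((fun q => x + q) ⁻¹' B) ≠ ⊤ :=
      ENNReal.mul_ne_top ENNReal.ofReal_ne_top (measure_ne_top _ _)
    have hb : (ENNReal.ofReal (1 - t) • ρ₂) ((fun q => x + q) ⁻¹' B) ≠ ⊤ :=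
      ENNReal.mul_ne_top ENNReal.ofReal_ne_top (measure_ne_top _ _)
    rw [measureReal_add_apply ha hb, measureReal_ennreal_smul_apply, measureReal_ennreal_smul_apply,
      ENNReal.toReal_ofReal h0, ENNReal.toReal_ofReal (by linarith)]
  have hi : ∀ ρ : Measure (Fin n → ℝ), ∀ _ : IsProbabilityMeasure ρ,
      Integrable (fun x => (kern ρ B x : ℂ) * (conj (φ x) * ψ x)) volume := by
    intro ρ _
    refine (integrable_conj_mul φ ψ).bdd_mul
      (Complex.measurable_ofReal.comp (kern_measurable ρ hB)).aestronglyMeasurable (c := 1)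
      (Filter.Eventually.of_forall fun x => ?_)
    simpa using kern_bound ρ B x
  simp only [add_apply, smul_apply, inner_add_right,
    inner_smul_right]
  rw [inner_convOp ρ₁ hB, inner_convOp ρ₂ hB, inner_convOp _ hB, ← integral_const_mul,
    ← integral_const_mul, ← integral_add ((hi _ inferInstance).const_mul _)
      ((hi _ inferInstance).const_mul _)]
  congr 1
  ext x
  rw [hk]
  push_cast
  ring

theorem exists_posL2 (n : ℕ) : ∃ g : L2Rn n, ∀ᵐ x, g x ≠ 0 := by
  obtain ⟨g, hg0, hgm, hgi⟩ := exists_pos_lintegral_lt_of_sigmaFinite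
    (volume : Measure (Fin n → ℝ)) (ε := 1) one_ne_zero
  have hm : Measurable (fun x => ((Real.sqrt (g x) : ℝ) : ℂ)) :=
    Complex.measurable_ofReal.comp (hgm.coe_nnreal_real.sqrt)
  have hL : MemLp (fun x => ((Real.sqrt (g x) : ℝ) : ℂ)) 2 (volume : Measure (Fin n → ℝ)) := by
    rw [memLp_two_iff_integrable_sq_norm hm.aestronglyMeasurable]
    have : (fun x => ‖((Real.sqrt (g x) : ℝ) : ℂ)‖ ^ 2) = fun x => (g x : ℝ) := by
      ext x
      rw [Complex.norm_real, Real.norm_of_nonneg (Real.sqrt_nonneg _), Real.sq_sqrt (g x).coe_nonneg]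
    rw [this]
    refine ⟨hgm.coe_nnreal_real.aestronglyMeasurable, ?_⟩
    rw [hasFiniteIntegral_iff_enorm]
    refine lt_of_eq_of_lt ?_ (hgi.trans ENNReal.one_lt_top)
    refine lintegral_congr fun x => ?_
    simp
  refine ⟨hL.toLp _, ?_⟩
  filter_upwards [hL.coeFn_toLp] with x hx
  rw [hx]
  have : 0 < Real.sqrt (g x) := Real.sqrt_pos.2 (hg0 x)
  exact_mod_cast this.ne'

theorem kern_ae_eq (ρ₁ ρ₂ : Measure (Fin n → ℝ)) [IsProbabilityMeasure ρ₁]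
    [IsProbabilityMeasure ρ₂] {B : Set (Fin n → ℝ)} (hB : MeasurableSet B)
    (h : convOp ρ₁ B = convOp ρ₂ B) : kern ρ₁ B =ᵐ[volume] kern ρ₂ B := by
  obtain ⟨g, hg⟩ := exists_posL2 n
  rw [convOp, dif_pos hB, convOp, dif_pos hB] at h
  have h1 := mulOp_coe (kern ρ₁ B) (kern_measurable ρ₁ hB) (kern_bound ρ₁ B) g
  have h2 := mulOp_coe (kern ρ₂ B) (kern_measurable ρ₂ hB) (kern_bound ρ₂ B) g
  rw [h] at h1
  filter_upwards [h1, h2, hg] with x a b c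
  have := a.symm.trans b
  exact_mod_cast mul_right_cancel₀ c this

theorem conv_inj (ρ₁ ρ₂ : Measure (Fin n → ℝ)) [IsProbabilityMeasure ρ₁]
    [IsProbabilityMeasure ρ₂] (M : POVM (Fin n → ℝ) (L2Rn n))
    (h₁ : ConvRel n ρ₁ M) (h₂ : ConvRel n ρ₂ M) : ρ₁ = ρ₂ := by
  rw [convRel_iff] at h₁ h₂
  set C := generateSetAlgebra (MeasurableSpace.countableGeneratingSet (Fin n → ℝ)) with hC
  have hCc : C.Countable := countable_generateSetAlgebra
    (MeasurableSpace.countable_countableGeneratingSet)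
  have hgen : (MeasurableSpace.pi : MeasurableSpace (Fin n → ℝ)) = MeasurableSpace.generateFrom C := by
    rw [hC, generateFrom_generateSetAlgebra_eq,
      MeasurableSpace.generateFrom_countableGeneratingSet]
  have hmeas : ∀ B ∈ C, MeasurableSet B := by
    intro B hB
    rw [hgen]
    exact MeasurableSpace.measurableSet_generateFrom hB
  have hae : ∀ᵐ y ∂(volume : Measure (Fin n → ℝ)), ∀ B ∈ C, kern ρ₁ B y = kern ρ₂ B y := by
    rw [ae_ball_iff hCc]
    intro B hB
    exact kern_ae_eq ρ₁ ρ₂ (hmeas B hB) (by rw [← h₁ B (hmeas B hB), ← h₂ B (hmeas B hB)])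
  obtain ⟨y, hy⟩ := hae.exists
  have hmap : ρ₁.map (fun q => y + q) = ρ₂.map (fun q => y + q) := by
    have i1 : IsProbabilityMeasure (ρ₁.map (fun q => y + q)) :=
      Measure.isProbabilityMeasure_map (measurable_const_add y).aemeasurable
    have i2 : IsProbabilityMeasure (ρ₂.map (fun q => y + q)) :=
      Measure.isProbabilityMeasure_map (measurable_const_add y).aemeasurable
    refine ext_of_generate_finite C hgen ?_ ?_ (by simp)
    · intro s hs t ht _
      exact isSetAlgebra_generateSetAlgebra.inter_mem hs ht
    · intro B hB
      rw [Measure.map_apply (measurable_const_add y) (hmeas B hB),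
        Measure.map_apply (measurable_const_add y) (hmeas B hB)]
      exact (measureReal_eq_measureReal_iff (by finiteness) (by finiteness)).1 (hy B hB)
  have := congrArg (Measure.map (fun q => -y + q)) hmap
  rw [Measure.map_map (measurable_const_add _) (measurable_const_add _),
    Measure.map_map (measurable_const_add _) (measurable_const_add _)] at this
  have hid : (fun q => -y + q) ∘ (fun q => y + q) = id := by ext; simp
  rwa [hid, Measure.map_id, Measure.map_id] at this

noncomputable def pw (p x : Fin n → ℝ) : ℂ :=
  Complex.exp (Complex.I * ((∑ k, p k * x k : ℝ) : ℂ))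

theorem pw_measurable (p : Fin n → ℝ) : Measurable (pw p) := by
  unfold pw
  fun_prop

theorem pw_norm (p x : Fin n → ℝ) : ‖pw p x‖ = 1 := by
  unfold pw
  exact Complex.norm_exp_I_mul_ofReal _

theorem pw_conj (p x : Fin n → ℝ) : conj (pw p x) = pw (-p) x := by
  unfold pw
  rw [← Complex.exp_conj]
  simp

theorem integrable_pw_mul (p : Fin n → ℝ) {F : (Fin n → ℝ) → ℂ} (hF : Integrable F volume) :
    Integrable (fun x => pw p x * F x) volume :=
  hF.bdd_mul (pw_measurable p).aestronglyMeasurable (c := 1)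
    (Filter.Eventually.of_forall fun x => (pw_norm p x).le)

theorem dual_eq_pw (L : StrongDual ℝ (Fin n → ℝ)) :
    ∃ p : Fin n → ℝ, ∀ x, Complex.exp (L x * Complex.I) = pw p x := by
  refine ⟨fun k => L (Pi.single k 1), fun x => ?_⟩
  unfold pw
  have : L x = ∑ k, L (Pi.single k 1) * x k := by
    conv_lhs => rw [pi_eq_sum_univ' x]
    rw [map_sum]
    refine Finset.sum_congr rfl fun k _ => ?_
    rw [map_smul, smul_eq_mul, mul_comm]
  rw [this, mul_comm]

theorem fourier_real {f : (Fin n → ℝ) → ℝ} (hm : Measurable f) (hf : Integrable f volume)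
    (h : ∀ p : Fin n → ℝ, ∫ x, pw p x * (f x : ℂ) = 0) : f =ᵐ[volume] 0 := by
  set a : (Fin n → ℝ) → ENNReal := fun x => ENNReal.ofReal (f x)
  set b : (Fin n → ℝ) → ENNReal := fun x => ENNReal.ofReal (- f x)
  have ham : Measurable a := hm.ennreal_ofReal
  have hbm : Measurable b := hm.neg.ennreal_ofReal
  have hat : ∫⁻ x, a x ≠ ⊤ := hf.lintegral_lt_top.ne
  have hbt : ∫⁻ x, b x ≠ ⊤ := hf.neg.lintegral_lt_top.ne
  have i1 : IsFiniteMeasure (volume.withDensity a) := isFiniteMeasure_withDensity hat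
  have i2 : IsFiniteMeasure (volume.withDensity b) := isFiniteMeasure_withDensity hbt
  have hcf : charFunDual (volume.withDensity a) = charFunDual (volume.withDensity b) := by
    ext L
    obtain ⟨p, hp⟩ := dual_eq_pw L
    rw [charFunDual_apply, charFunDual_apply]
    simp_rw [hp]
    rw [integral_withDensity_eq_integral_toReal_smul ham (by simp [a]),
      integral_withDensity_eq_integral_toReal_smul hbm (by simp [b]), ← sub_eq_zero]
    have ia : Integrable (fun x => (((a x).toReal : ℝ) : ℂ)) volume :=
      (integrable_toReal_of_lintegral_ne_top ham.aemeasurable hat).ofReal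
    have ib : Integrable (fun x => (((b x).toReal : ℝ) : ℂ)) volume :=
      (integrable_toReal_of_lintegral_ne_top hbm.aemeasurable hbt).ofReal
    rw [← integral_sub, ← h p]
    · congr 1
      ext x
      have : f x = (a x).toReal - (b x).toReal := by
        simp only [a, b, ENNReal.toReal_ofReal']
        rw [max_zero_sub_max_neg_zero_eq_self]
      rw [this, Complex.real_smul, Complex.real_smul]
      push_cast; ring
    · refine (integrable_pw_mul p ia).congr (Filter.Eventually.of_forall fun x => ?_)
      simp [Complex.real_smul, mul_comm]
    · refine (integrable_pw_mul p ib).congr (Filter.Eventually.of_forall fun x => ?_)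
      simp [Complex.real_smul, mul_comm]
  have := Measure.ext_of_charFunDual hcf
  rw [withDensity_eq_iff ham.aemeasurable hbm.aemeasurable hat] at this
  filter_upwards [this] with x hx
  simp only [a, b] at hx
  rcases le_total (f x) 0 with h0 | h0
  · rw [ENNReal.ofReal_of_nonpos h0, eq_comm, ENNReal.ofReal_eq_zero] at hx
    simp only [Pi.zero_apply]; linarith
  · rw [ENNReal.ofReal_of_nonpos (by linarith : - f x ≤ 0), ENNReal.ofReal_eq_zero] at hx
    simp only [Pi.zero_apply]; linarith

theorem fourier_zero_aux {F : (Fin n → ℝ) → ℂ} (hm : Measurable F) (hF : Integrable F volume)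
    (h : ∀ p : Fin n → ℝ, ∫ x, pw p x * F x = 0) : F =ᵐ[volume] 0 := by
  have hFc : Integrable (fun x => conj (F x)) volume := by
    refine hF.mono (Complex.continuous_conj.measurable.comp hm).aestronglyMeasurable
      (Filter.Eventually.of_forall fun x => by simp)
  have h' : ∀ p : Fin n → ℝ, ∫ x, pw p x * conj (F x) = 0 := by
    intro p
    have := congrArg conj (h (-p))
    rw [← integral_conj, map_zero] at this
    rw [← this]
    congr 1
    ext x
    rw [map_mul, pw_conj, neg_neg]
  have hre : (fun x => (F x).re) =ᵐ[volume] 0 := by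
    refine fourier_real (Complex.measurable_re.comp hm) hF.re fun p => ?_
    have : (fun x => pw p x * ((F x).re : ℂ)) =
        fun x => (1 / 2 : ℂ) * (pw p x * F x + pw p x * conj (F x)) := by
      ext x
      rw [← mul_add, Complex.add_conj]; push_cast; ring
    rw [this, integral_const_mul, integral_add (integrable_pw_mul p hF) (integrable_pw_mul p hFc),
      h, h']
    simp
  have him : (fun x => (F x).im) =ᵐ[volume] 0 := by
    refine fourier_real (Complex.measurable_im.comp hm) hF.im fun p => ?_
    have : (fun x => pw p x * ((F x).im : ℂ)) =
        fun x => (1 / (2 * Complex.I) : ℂ) * (pw p x * F x - pw p x * conj (F x)) := by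
      ext x
      rw [← mul_sub, Complex.sub_conj]; push_cast
      field_simp
    rw [this, integral_const_mul, integral_sub (integrable_pw_mul p hF) (integrable_pw_mul p hFc),
      h, h']
    simp
  filter_upwards [hre, him] with x h1 h2
  exact Complex.ext h1 h2

theorem boost_symm (V : (Fin n → ℝ) → (L2Rn n ≃ₗᵢ[ℂ] L2Rn n))
    (hV : ∀ p : Fin n → ℝ, ∀ φ : L2Rn n,
      (V p φ : (Fin n → ℝ) → ℂ) =ᵐ[volume]
        fun x => Complex.exp (Complex.I * (∑ k, p k * x k)) * φ x)
    (M : POVM (Fin n → ℝ) (L2Rn n)) (hM : BoostInvariant n V M)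
    {B : Set (Fin n → ℝ)} (hB : MeasurableSet B) (φ ψ : L2Rn n) :
    ∀ᵐ x, conj (M.toFun B φ x) * ψ x = conj (φ x) * M.toFun B ψ x := by
  set T := M.toFun B
  have hI1 := integrable_conj_mul (T φ) ψ
  have hI2 := integrable_conj_mul φ (T ψ)
  have hms : ∀ χ : L2Rn n, Measurable (χ : (Fin n → ℝ) → ℂ) :=
    fun χ => (Lp.stronglyMeasurable χ).measurable
  have hmc : ∀ χ : L2Rn n, Measurable (fun x => conj (χ x)) :=
    fun χ => Complex.continuous_conj.measurable.comp (hms χ)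
  have key := fourier_zero_aux (F := fun x => conj (T φ x) * ψ x - conj (φ x) * T ψ x)
    (((hmc _).mul (hms _)).sub ((hmc _).mul (hms _))) (hI1.sub hI2) (fun p => by
      simp_rw [mul_sub]
      rw [integral_sub (integrable_pw_mul p hI1) (integrable_pw_mul p hI2), sub_eq_zero]
      have e1 : ⟪T φ, V p ψ⟫ = ∫ x, pw p x * (conj (T φ x) * ψ x) := by
        rw [L2.inner_def]
        refine integral_congr_ae ?_
        filter_upwards [hV p ψ] with x hx
        rw [RCLike.inner_apply, hx, pw]; ring
      have e2 : ⟪φ, V p (T ψ)⟫ = ∫ x, pw p x * (conj (φ x) * T ψ x) := by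
        rw [L2.inner_def]
        refine integral_congr_ae ?_
        filter_upwards [hV p (T ψ)] with x hx
        rw [RCLike.inner_apply, hx, pw]; ring
      rw [← e1, ← e2, (M.isPositive B hB).inner_left_eq_inner_right]
      have e3 := hM p B hB ((V p).symm φ) ψ
      rw [LinearIsometryEquiv.apply_symm_apply] at e3
      rw [e3, ← (V p).inner_map_map, LinearIsometryEquiv.apply_symm_apply])
  filter_upwards [key] with x hx
  exact sub_eq_zero.1 hx

theorem boost_mult (V : (Fin n → ℝ) → (L2Rn n ≃ₗᵢ[ℂ] L2Rn n))
    (hV : ∀ p : Fin n → ℝ, ∀ φ : L2Rn n,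
      (V p φ : (Fin n → ℝ) → ℂ) =ᵐ[volume]
        fun x => Complex.exp (Complex.I * (∑ k, p k * x k)) * φ x)
    (M : POVM (Fin n → ℝ) (L2Rn n)) (hM : BoostInvariant n V M)
    {B : Set (Fin n → ℝ)} (hB : MeasurableSet B) :
    ∃ m : (Fin n → ℝ) → ℝ, Measurable m ∧ (∀ x, 0 ≤ m x) ∧
      ∀ φ : L2Rn n, ∀ᵐ x, M.toFun B φ x = (m x : ℂ) * φ x := by
  obtain ⟨g, hg⟩ := exists_posL2 n
  have hs := boost_symm V hV M hM hB
  set T := M.toFun B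
  have hms : ∀ χ : L2Rn n, Measurable (χ : (Fin n → ℝ) → ℂ) :=
    fun χ => (Lp.stronglyMeasurable χ).measurable
  have hmc : ∀ χ : L2Rn n, Measurable (fun x => conj (χ x)) :=
    fun χ => Complex.continuous_conj.measurable.comp (hms χ)
  set r : (Fin n → ℝ) → ℝ := fun x => (conj (T g x) * g x).re with hr
  have hrm : Measurable r := Complex.measurable_re.comp ((hmc _).mul (hms _))
  have hri : Integrable r volume := (integrable_conj_mul (T g) g).re
  have hreal : ∀ᵐ x, conj (T g x) * g x = (r x : ℂ) := by
    filter_upwards [hs g g] with x hx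
    refine (Complex.conj_eq_iff_re.1 ?_).symm
    rw [map_mul, Complex.conj_conj, mul_comm, ← hx]
  -- formula
  have hform : ∀ φ : L2Rn n, ∀ᵐ x, T φ x = ((r x / ‖g x‖ ^ 2 : ℝ) : ℂ) * φ x := by
    intro φ
    filter_upwards [hs φ g, hreal, hg] with x h1 h2 h3
    have h4 : T φ x * conj (g x) = φ x * conj (T g x) := by
      have := congrArg conj h1
      simpa using this
    have h5 : g x * conj (g x) = ((‖g x‖ ^ 2 : ℝ) : ℂ) := by
      rw [Complex.mul_conj']; push_cast; rfl
    have h6 : ((‖g x‖ ^ 2 : ℝ) : ℂ) ≠ 0 := by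
      exact_mod_cast pow_ne_zero 2 (norm_ne_zero_iff.2 h3)
    rw [Complex.ofReal_div, div_mul_eq_mul_div, eq_div_iff h6, ← h5, ← h2]
    linear_combination g x * h4
  have hnn : 0 ≤ᵐ[volume] r := by
    refine ae_nonneg_of_forall_setIntegral_nonneg hri fun A hA _ => ?_
    have hL : MemLp (A.indicator g) 2 (volume : Measure (Fin n → ℝ)) := (Lp.memLp g).indicator hA
    have hp := (M.isPositive B hB).re_inner_nonneg_right (hL.toLp _)
    rw [L2.inner_def] at hp
    have : ∫ x, ⟪hL.toLp _ x, T (hL.toLp _) x⟫ = ((∫ x in A, r x : ℝ) : ℂ) := by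
      rw [← integral_indicator hA, ← integral_complex_ofReal]
      refine integral_congr_ae ?_
      filter_upwards [hform (hL.toLp _), hL.coeFn_toLp, hg] with x h1 h2 h3
      rw [h1, h2, RCLike.inner_apply]
      by_cases hx : x ∈ A
      · rw [indicator_of_mem hx, indicator_of_mem hx, mul_assoc, Complex.mul_conj']
        have h6 : ‖g x‖ ≠ 0 := norm_ne_zero_iff.2 h3
        norm_cast
        field_simp
      · rw [indicator_of_notMem hx, indicator_of_notMem hx]; simp
    change 0 ≤ RCLike.re (∫ x, ⟪hL.toLp _ x, T (hL.toLp _) x⟫) at hp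
    rw [this] at hp
    simpa using hp
  refine ⟨fun x => max (r x) 0 / ‖g x‖ ^ 2, ?_, fun x => by positivity, fun φ => ?_⟩
  · exact (hrm.max measurable_const).div ((hms g).norm.pow_const 2)
  · filter_upwards [hform φ, hnn] with x h1 h2
    rw [h1, max_eq_left (show 0 ≤ r x from h2)]

theorem povm_re_nonneg (M : POVM (Fin n → ℝ) (L2Rn n)) {B : Set (Fin n → ℝ)}
    (hB : MeasurableSet B) (φ : L2Rn n) : 0 ≤ (⟪φ, M.toFun B φ⟫).re :=
  (M.isPositive B hB).re_inner_nonneg_right φ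

theorem povm_empty (M : POVM (Fin n → ℝ) (L2Rn n)) (φ : L2Rn n) :
    ⟪φ, M.toFun ∅ φ⟫ = 0 := by
  have h := M.m_iUnion (fun _ => ∅) (fun _ => MeasurableSet.empty)
    (fun _ _ _ => disjoint_bot_left) φ φ
  exact (summable_const_iff _).1 h.summable

noncomputable def muM (M : POVM (Fin n → ℝ) (L2Rn n)) (φ : L2Rn n) : Measure (Fin n → ℝ) :=
  Measure.ofMeasurable (fun B _ => ENNReal.ofReal (⟪φ, M.toFun B φ⟫).re)
    (by rw [povm_empty]; simp)
    (by
      intro B hB hd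
      have h := Complex.hasSum_re (M.m_iUnion B hB hd φ φ)
      rw [← h.tsum_eq, ENNReal.ofReal_tsum_of_nonneg (fun k => povm_re_nonneg M (hB k) φ)
        h.summable])

theorem muM_apply (M : POVM (Fin n → ℝ) (L2Rn n)) (φ : L2Rn n) {B : Set (Fin n → ℝ)}
    (hB : MeasurableSet B) : muM M φ B = ENNReal.ofReal (⟪φ, M.toFun B φ⟫).re :=
  Measure.ofMeasurable_apply B hB

theorem muM_univ (M : POVM (Fin n → ℝ) (L2Rn n)) (φ : L2Rn n) :
    muM M φ univ = ENNReal.ofReal (‖φ‖ ^ 2) := by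
  rw [muM_apply M φ MeasurableSet.univ, M.normalized]
  congr 1
  exact inner_self_eq_norm_sq (𝕜 := ℂ) φ

theorem muM_finite (M : POVM (Fin n → ℝ) (L2Rn n)) (φ : L2Rn n) : IsFiniteMeasure (muM M φ) :=
  ⟨by rw [muM_univ]; exact ENNReal.ofReal_lt_top⟩

theorem muM_eq_lintegral (M : POVM (Fin n → ℝ) (L2Rn n)) {B : Set (Fin n → ℝ)}
    (hB : MeasurableSet B) (m : (Fin n → ℝ) → ℝ) (h0 : ∀ x, 0 ≤ m x)
    (φ : L2Rn n) (h : ∀ᵐ x, M.toFun B φ x = (m x : ℂ) * φ x) :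
    muM M φ B = ∫⁻ x, ‖φ x‖ₑ ^ 2 * ENNReal.ofReal (m x) := by
  rw [muM_apply M φ hB, L2.inner_def]
  have hi := L2.integrable_inner (𝕜 := ℂ) φ (M.toFun B φ)
  have hae : ∀ᵐ x, ⟪φ x, M.toFun B φ x⟫ = ((‖φ x‖ ^ 2 * m x : ℝ) : ℂ) := by
    filter_upwards [h] with x hx
    rw [hx, RCLike.inner_apply, mul_assoc, Complex.mul_conj']
    push_cast; ring
  have hi' : Integrable (fun x => ‖φ x‖ ^ 2 * m x) volume := by
    refine hi.re.congr ?_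
    filter_upwards [hae] with x hx
    rw [hx]; exact Complex.ofReal_re _
  rw [integral_congr_ae hae, integral_complex_ofReal, Complex.ofReal_re,
    ofReal_integral_eq_lintegral_ofReal hi'
      (Filter.Eventually.of_forall fun x => mul_nonneg (sq_nonneg _) (h0 x))]
  refine lintegral_congr fun x => ?_
  rw [ENNReal.ofReal_mul (sq_nonneg _), ENNReal.ofReal_pow (norm_nonneg _), ofReal_norm]

noncomputable def wD (φ : L2Rn n) : Measure (Fin n → ℝ) :=
  volume.withDensity (fun x => ‖φ x‖ₑ ^ 2)

theorem wD_dens_meas (φ : L2Rn n) : Measurable (fun x => ‖φ x‖ₑ ^ 2) :=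
  (Lp.stronglyMeasurable φ).measurable.enorm.pow_const 2

theorem wD_univ (φ : L2Rn n) : wD φ univ = ENNReal.ofReal (‖φ‖ ^ 2) := by
  have := convPOVM (Measure.dirac (0 : Fin n → ℝ))
  rw [← muM_univ this, muM_eq_lintegral this MeasurableSet.univ (fun _ => 1)
    (fun _ => zero_le_one) φ]
  · simp [wD]
  · rw [this.normalized]
    simp

theorem wD_finite (φ : L2Rn n) : IsFiniteMeasure (wD φ) :=
  ⟨by rw [wD_univ]; exact ENNReal.ofReal_lt_top⟩

theorem conv_apply_aux (μ ν : Measure (Fin n → ℝ)) [IsFiniteMeasure μ] [IsFiniteMeasure ν]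
    {B : Set (Fin n → ℝ)} (hB : MeasurableSet B) :
    (μ ∗ ν) B = ∫⁻ x, ν ((fun q => x + q) ⁻¹' B) ∂μ := by
  rw [← lintegral_indicator_one hB, Measure.lintegral_conv (measurable_one.indicator hB)]
  refine lintegral_congr fun x => ?_
  rw [← lintegral_indicator_one (measurable_const_add x hB)]
  rfl

theorem wD_conv (ρ : Measure (Fin n → ℝ)) [IsFiniteMeasure ρ] (φ : L2Rn n)
    {B : Set (Fin n → ℝ)} (hB : MeasurableSet B) :
    (wD φ ∗ ρ) B = ∫⁻ x, ‖φ x‖ₑ ^ 2 * ρ ((fun q => x + q) ⁻¹' B) := by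
  have := wD_finite φ
  rw [conv_apply_aux _ _ hB, wD, lintegral_withDensity_eq_lintegral_mul _ (wD_dens_meas φ)]
  · rfl
  · exact measurable_measure_prodMk_left (ν := ρ) (measurable_add hB)

theorem muM_convPOVM (ρ : Measure (Fin n → ℝ)) [IsProbabilityMeasure ρ] (φ : L2Rn n) :
    muM (convPOVM ρ) φ = wD φ ∗ ρ := by
  ext B hB
  rw [wD_conv ρ φ hB, muM_eq_lintegral _ hB (kern ρ B) (fun _ => measureReal_nonneg)]
  · refine lintegral_congr fun x => ?_
    rw [kern, ofReal_measureReal]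
  · change ∀ᵐ x, convOp ρ B φ x = _
    rw [convOp, dif_pos hB]
    exact mulOp_coe _ _ _ φ

theorem muM_comm (U : (Fin n → ℝ) → (L2Rn n ≃ₗᵢ[ℂ] L2Rn n))
    (hU : ∀ q : Fin n → ℝ, ∀ φ : L2Rn n,
      (U q φ : (Fin n → ℝ) → ℂ) =ᵐ[volume] fun x => φ (x - q))
    (V : (Fin n → ℝ) → (L2Rn n ≃ₗᵢ[ℂ] L2Rn n))
    (hV : ∀ p : Fin n → ℝ, ∀ φ : L2Rn n,
      (V p φ : (Fin n → ℝ) → ℂ) =ᵐ[volume]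
        fun x => Complex.exp (Complex.I * (∑ k, p k * x k)) * φ x)
    (M : POVM (Fin n → ℝ) (L2Rn n)) (hT : TransCovariant n U M) (hM : BoostInvariant n V M)
    (φ ψ : L2Rn n) : wD ψ ∗ muM M φ = wD φ ∗ muM M ψ := by
  have f1 := muM_finite M φ
  have f2 := muM_finite M ψ
  ext B hB
  obtain ⟨m, hmm, hm0, hm⟩ := boost_mult V hV M hM hB
  have hshift : ∀ (χ : L2Rn n) (q : Fin n → ℝ), muM M χ ((fun y => q + y) ⁻¹' B)
      = ∫⁻ x, ‖χ (x - q)‖ₑ ^ 2 * ENNReal.ofReal (m x) := by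
    intro χ q
    have hB' : MeasurableSet ((fun y => q + y) ⁻¹' B) := measurable_const_add q hB
    have him : (fun x => x + q) '' ((fun y => q + y) ⁻¹' B) = B := by
      ext z
      simp only [mem_image, mem_preimage]
      constructor
      · rintro ⟨w, hw, rfl⟩
        rwa [add_comm]
      · intro hz
        exact ⟨z - q, by simpa using hz, by simp⟩
    have h1 : muM M χ ((fun y => q + y) ⁻¹' B) = muM M (U q χ) B := by
      rw [muM_apply M χ hB', muM_apply M _ hB, ← hT q _ hB' χ χ, him]
    rw [h1, muM_eq_lintegral M hB m hm0 _ (hm _)]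
    refine lintegral_congr_ae ?_
    filter_upwards [hU q χ] with x hx
    rw [hx]
  rw [wD_conv _ _ hB, wD_conv _ _ hB]
  simp_rw [hshift]
  have hswap : ∀ χ ξ : L2Rn n,
      ∫⁻ q, ‖ξ q‖ₑ ^ 2 * ∫⁻ x, ‖χ (x - q)‖ₑ ^ 2 * ENNReal.ofReal (m x)
      = ∫⁻ x, ENNReal.ofReal (m x) * ∫⁻ q, ‖ξ q‖ₑ ^ 2 * ‖χ (x - q)‖ₑ ^ 2 := by
    intro χ ξ
    have hc := wD_dens_meas χ
    have hx := wD_dens_meas ξ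
    have hj : Measurable (fun p : (Fin n → ℝ) × (Fin n → ℝ) => ‖χ (p.2 - p.1)‖ₑ ^ 2) :=
      hc.comp (measurable_snd.sub measurable_fst)
    have e1 : ∀ q, ‖ξ q‖ₑ ^ 2 * ∫⁻ x, ‖χ (x - q)‖ₑ ^ 2 * ENNReal.ofReal (m x)
        = ∫⁻ x, ‖ξ q‖ₑ ^ 2 * (‖χ (x - q)‖ₑ ^ 2 * ENNReal.ofReal (m x)) := by
      intro q
      rw [lintegral_const_mul]
      exact (hc.comp (measurable_id.sub_const q)).mul hmm.ennreal_ofReal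
    have e2 : ∀ x, ENNReal.ofReal (m x) * ∫⁻ q, ‖ξ q‖ₑ ^ 2 * ‖χ (x - q)‖ₑ ^ 2
        = ∫⁻ q, ENNReal.ofReal (m x) * (‖ξ q‖ₑ ^ 2 * ‖χ (x - q)‖ₑ ^ 2) := by
      intro x
      rw [lintegral_const_mul]
      exact hx.mul (hc.comp (measurable_const.sub measurable_id))
    simp_rw [e1, e2]
    rw [lintegral_lintegral_swap]
    · refine lintegral_congr fun x => lintegral_congr fun q => ?_
      ring
    · exact ((hx.comp measurable_fst).mul
        (hj.mul (hmm.ennreal_ofReal.comp measurable_snd))).aemeasurable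
  rw [hswap, hswap]
  refine lintegral_congr fun x => ?_
  congr 1
  rw [← lintegral_sub_left_eq_self _ x]
  refine lintegral_congr fun q => ?_
  rw [sub_sub_cancel, mul_comm]

theorem exists_conc (r : ℝ) (hr : 0 < r) :
    ∃ φ : L2Rn n, ‖φ‖ = 1 ∧ wD φ (Metric.closedBall 0 r)ᶜ = 0 := by
  have hs : MeasurableSet (Metric.closedBall (0 : Fin n → ℝ) r) := measurableSet_closedBall
  have hf : volume (Metric.closedBall (0 : Fin n → ℝ) r) ≠ ⊤ :=
    (isCompact_closedBall _ _).measure_lt_top.ne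
  have hp : 0 < volume (Metric.closedBall (0 : Fin n → ℝ) r) :=
    Metric.measure_closedBall_pos _ _ hr
  set ψ : L2Rn n := indicatorConstLp 2 hs hf (1 : ℂ) with hψ
  have hn : ‖ψ‖ ≠ 0 := by
    rw [hψ, norm_indicatorConstLp (by norm_num) (by norm_num)]
    have : 0 < volume.real (Metric.closedBall (0 : Fin n → ℝ) r) :=
      ENNReal.toReal_pos hp.ne' hf
    rw [norm_one, one_mul]
    exact (Real.rpow_pos_of_pos this _).ne'
  refine ⟨((‖ψ‖⁻¹ : ℝ) : ℂ) • ψ, ?_, ?_⟩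
  · rw [norm_smul, Complex.norm_real, norm_inv, norm_norm, inv_mul_cancel₀ hn]
  · rw [wD, withDensity_apply _ hs.compl, lintegral_eq_zero_iff (wD_dens_meas _),
      Filter.EventuallyEq, ae_restrict_iff' hs.compl]
    have h1 : ∀ᵐ x, ψ x = _ := indicatorConstLp_coeFn
    filter_upwards [h1, Lp.coeFn_smul (((‖ψ‖⁻¹ : ℝ) : ℂ)) ψ] with x hx hx2 hxs
    rw [hx2, Pi.smul_apply, hx, indicator_of_notMem hxs]
    simp

theorem wD_prob {φ : L2Rn n} (h : ‖φ‖ = 1) : IsProbabilityMeasure (wD φ) :=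
  ⟨by rw [wD_univ, h]; simp⟩

theorem muM_prob (M : POVM (Fin n → ℝ) (L2Rn n)) {φ : L2Rn n} (h : ‖φ‖ = 1) :
    IsProbabilityMeasure (muM M φ) :=
  ⟨by rw [muM_univ, h]; simp⟩

theorem conv_tail_ge (μ ν : Measure (Fin n → ℝ)) [IsProbabilityMeasure μ]
    [IsProbabilityMeasure ν] (hν : ν (Metric.closedBall 0 1)ᶜ = 0) (R : ℝ) :
    μ (Metric.closedBall 0 (R + 1))ᶜ ≤ (μ ∗ ν) (Metric.closedBall 0 R)ᶜ := by
  rw [conv_apply_aux _ _ measurableSet_closedBall.compl,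
    ← lintegral_indicator_one measurableSet_closedBall.compl]
  refine lintegral_mono fun x => ?_
  by_cases hx : x ∈ (Metric.closedBall (0 : Fin n → ℝ) (R + 1))ᶜ
  · rw [indicator_of_mem hx, Pi.one_apply]
    have h1 : ν (Metric.closedBall 0 1) = 1 :=
      (prob_compl_eq_zero_iff measurableSet_closedBall).1 hν
    rw [← h1]
    refine measure_mono fun q hq => ?_
    simp only [mem_compl_iff, mem_closedBall_zero_iff, not_le, mem_preimage] at hx hq ⊢
    have := norm_sub_le (x + q) q
    rw [add_sub_cancel_right] at this
    linarith
  · rw [indicator_of_notMem hx]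
    exact zero_le

theorem conv_tail_le (μ ν : Measure (Fin n → ℝ)) [IsProbabilityMeasure μ]
    [IsProbabilityMeasure ν] (hν : ν (Metric.closedBall 0 1)ᶜ = 0) (R : ℝ) :
    (μ ∗ ν) (Metric.closedBall 0 (R + 1))ᶜ ≤ μ (Metric.closedBall 0 R)ᶜ := by
  rw [conv_apply_aux _ _ measurableSet_closedBall.compl,
    ← lintegral_indicator_one (μ := μ) measurableSet_closedBall.compl]
  refine lintegral_mono fun x => ?_
  by_cases hx : x ∈ (Metric.closedBall (0 : Fin n → ℝ) R)ᶜ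
  · rw [indicator_of_mem hx, Pi.one_apply]
    exact prob_le_one
  · rw [indicator_of_notMem hx, ← hν]
    refine measure_mono fun q hq => ?_
    simp only [mem_compl_iff, mem_closedBall_zero_iff, not_le, mem_preimage, not_lt] at hx hq ⊢
    have := norm_add_le x q
    linarith

noncomputable def pconv (μ ν : ProbabilityMeasure (Fin n → ℝ)) : ProbabilityMeasure (Fin n → ℝ) :=
  (μ.prod ν).map (f := fun p : (Fin n → ℝ) × (Fin n → ℝ) => p.1 + p.2)
    measurable_add.aemeasurable

theorem pconv_coe (μ ν : ProbabilityMeasure (Fin n → ℝ)) :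
    (pconv μ ν : Measure (Fin n → ℝ)) = (μ : Measure (Fin n → ℝ)) ∗ (ν : Measure (Fin n → ℝ)) := rfl

theorem pconv_tendsto {ι : Type*} {L : Filter ι} {a b : ι → ProbabilityMeasure (Fin n → ℝ)}
    {μ ν : ProbabilityMeasure (Fin n → ℝ)} (ha : Filter.Tendsto a L (nhds μ))
    (hb : Filter.Tendsto b L (nhds ν)) :
    Filter.Tendsto (fun i => pconv (a i) (b i)) L (nhds (pconv μ ν)) := by
  have h := (ProbabilityMeasure.continuous_prod.tendsto (μ, ν)).comp (ha.prodMk_nhds hb)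
  exact ProbabilityMeasure.tendsto_map_of_tendsto_of_continuous _ _ h continuous_add

theorem conv_surj (U : (Fin n → ℝ) → (L2Rn n ≃ₗᵢ[ℂ] L2Rn n))
    (hU : ∀ q : Fin n → ℝ, ∀ φ : L2Rn n,
      (U q φ : (Fin n → ℝ) → ℂ) =ᵐ[volume] fun x => φ (x - q))
    (V : (Fin n → ℝ) → (L2Rn n ≃ₗᵢ[ℂ] L2Rn n))
    (hV : ∀ p : Fin n → ℝ, ∀ φ : L2Rn n,
      (V p φ : (Fin n → ℝ) → ℂ) =ᵐ[volume]
        fun x => Complex.exp (Complex.I * (∑ k, p k * x k)) * φ x)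
    (M : POVM (Fin n → ℝ) (L2Rn n)) (hT : TransCovariant n U M) (hM : BoostInvariant n V M) :
    ∃ ρ : Measure (Fin n → ℝ), IsProbabilityMeasure ρ ∧ ConvRel n ρ M := by
  have hex : ∀ k : ℕ, ∃ φ : L2Rn n, ‖φ‖ = 1 ∧ wD φ (Metric.closedBall 0 (1 / ((k : ℝ) + 1)))ᶜ = 0 :=
    fun k => exists_conc _ (by positivity)
  choose u hu1 hu2 using hex
  have hu3 : ∀ k, wD (u k) (Metric.closedBall 0 1)ᶜ = 0 := by
    intro k
    refine measure_mono_null (compl_subset_compl.2 (Metric.closedBall_subset_closedBall ?_)) (hu2 k)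
    rw [div_le_one (by positivity)]
    have : (0 : ℝ) ≤ k := Nat.cast_nonneg k
    linarith
  have pw : ∀ k, IsProbabilityMeasure (wD (u k)) := fun k => wD_prob (hu1 k)
  have pm : ∀ k, IsProbabilityMeasure (muM M (u k)) := fun k => muM_prob M (hu1 k)
  let μs : ℕ → ProbabilityMeasure (Fin n → ℝ) := fun k => ⟨muM M (u k), pm k⟩
  let ws : ℕ → ProbabilityMeasure (Fin n → ℝ) := fun k => ⟨wD (u k), pw k⟩
  have htail : ∀ k (R : ℝ), muM M (u k) (Metric.closedBall 0 (R + 1 + 1))ᶜ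
      ≤ muM M (u 0) (Metric.closedBall 0 R)ᶜ := by
    intro k R
    refine (conv_tail_ge _ (wD (u 0)) (hu3 0) (R + 1)).trans ?_
    rw [Measure.conv_comm, muM_comm U hU V hV M hT hM, Measure.conv_comm]
    exact conv_tail_le _ _ (hu3 k) R
  have htight : IsTightMeasureSet
      {((μ : ProbabilityMeasure (Fin n → ℝ)) : Measure (Fin n → ℝ)) | μ ∈ range μs} := by
    rw [isTightMeasureSet_iff_exists_isCompact_measure_compl_le]
    intro ε hε
    obtain ⟨K, hK, hK2⟩ := isTightMeasureSet_iff_exists_isCompact_measure_compl_le.1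
      (isTightMeasureSet_singleton (μ := muM M (u 0))) ε hε
    obtain ⟨R, hR⟩ := hK.isBounded.subset_closedBall (0 : Fin n → ℝ)
    refine ⟨Metric.closedBall 0 (R + 1 + 1), isCompact_closedBall _ _, ?_⟩
    rintro _ ⟨_, ⟨k, rfl⟩, rfl⟩
    exact (htail k R).trans ((measure_mono (compl_subset_compl.2 hR)).trans (hK2 _ rfl))
  have hcomp := isCompact_closure_of_isTightMeasureSet htight
  obtain ⟨ρ, -, hρ⟩ := hcomp.ultrafilter_le_nhds ((Filter.hyperfilter ℕ).map μs)
    (.trans (by simp) (Filter.monotone_principal subset_closure))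
  have hρ' : Filter.Tendsto μs (Filter.hyperfilter ℕ) (nhds ρ) := hρ
  let δ : ProbabilityMeasure (Fin n → ℝ) := ⟨Measure.dirac 0, inferInstance⟩
  have hδ : Filter.Tendsto ws (Filter.hyperfilter ℕ) (nhds δ) := by
    have h : Filter.Tendsto ws Filter.atTop (nhds δ) := by
      refine tendsto_of_forall_isOpen_le_liminf_nat' fun G hG => ?_
      change Measure.dirac 0 G ≤ _
      by_cases h0 : (0 : Fin n → ℝ) ∈ G
      · refine le_trans prob_le_one (Filter.le_liminf_of_le (by isBoundedDefault) ?_)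
        obtain ⟨ε, hε, hball⟩ := Metric.isOpen_iff.1 hG 0 h0
        obtain ⟨N, hN⟩ := exists_nat_one_div_lt hε
        filter_upwards [Filter.eventually_ge_atTop N] with k hk
        change 1 ≤ wD (u k) G
        rw [← (prob_compl_eq_zero_iff measurableSet_closedBall).1 (hu2 k)]
        refine measure_mono (fun x hx => hball ?_)
        refine Metric.closedBall_subset_ball (lt_of_le_of_lt ?_ hN) hx
        exact Nat.one_div_le_one_div hk
      · rw [Measure.dirac_apply' _ hG.measurableSet, indicator_of_notMem h0]
        exact zero_le
    refine h.mono_left ?_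
    rw [← Nat.cofinite_eq_atTop]
    exact Filter.hyperfilter_le_cofinite
  refine ⟨ρ, inferInstance, ?_⟩
  have key : ∀ ψ : L2Rn n, ‖ψ‖ = 1 → muM M ψ = muM (convPOVM (ρ : Measure (Fin n → ℝ))) ψ := by
    intro ψ hψ
    let a : ProbabilityMeasure (Fin n → ℝ) := ⟨wD ψ, wD_prob hψ⟩
    let b : ProbabilityMeasure (Fin n → ℝ) := ⟨muM M ψ, muM_prob M hψ⟩
    have t1 := pconv_tendsto (tendsto_const_nhds (x := a)) hρ'
    have t2 := pconv_tendsto hδ (tendsto_const_nhds (x := b))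
    have he : (fun i => pconv a (μs i)) = fun i => pconv (ws i) b := by
      funext i
      apply Subtype.ext
      exact muM_comm U hU V hV M hT hM (u i) ψ
    rw [he] at t1
    have h := congrArg (fun m : ProbabilityMeasure (Fin n → ℝ) => (m : Measure (Fin n → ℝ)))
      (tendsto_nhds_unique t1 t2)
    simp only [pconv_coe] at h
    rw [muM_convPOVM]
    have : IsProbabilityMeasure (muM M ψ) := muM_prob M hψ
    have h' : wD ψ ∗ (ρ : Measure (Fin n → ℝ)) = Measure.dirac 0 ∗ muM M ψ := h
    rw [h', Measure.dirac_zero_conv]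
  rw [convRel_iff]
  intro B hB
  have hP : ∀ (N : POVM (Fin n → ℝ) (L2Rn n)) (φ : L2Rn n),
      ⟪φ, N.toFun B φ⟫ = (((muM N φ B).toReal : ℝ) : ℂ) := by
    intro N φ
    rw [muM_apply N φ hB, ENNReal.toReal_ofReal (povm_re_nonneg N hB φ)]
    have h := (N.isPositive B hB).inner_nonneg_right φ
    exact (Complex.ext rfl (by rw [Complex.ofReal_im]; exact (Complex.nonneg_iff.1 h).2.symm))
  refine clm_ext_diag fun φ => ?_
  change _ = ⟪φ, (convPOVM (ρ : Measure (Fin n → ℝ))).toFun B φ⟫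
  by_cases h0 : φ = 0
  · simp [h0]
  · have hn : ‖φ‖ ≠ 0 := norm_ne_zero_iff.2 h0
    set ψ : L2Rn n := ((‖φ‖⁻¹ : ℝ) : ℂ) • φ with hψ
    have h1 : ‖ψ‖ = 1 := by
      rw [hψ, norm_smul, Complex.norm_real, norm_inv, norm_norm, inv_mul_cancel₀ hn]
    have h2 : φ = ((‖φ‖ : ℝ) : ℂ) • ψ := by
      rw [hψ, smul_smul, ← Complex.ofReal_mul, mul_inv_cancel₀ hn]; simp
    have h3 : ⟪ψ, M.toFun B ψ⟫ = ⟪ψ, (convPOVM (ρ : Measure (Fin n → ℝ))).toFun B ψ⟫ := by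
      rw [hP, hP, key ψ h1]
    rw [h2]
    simp only [map_smul, inner_smul_left, inner_smul_right, h3]

end aux

theorem stmt5 (n : ℕ) (hn : 1 ≤ n)
    (U : (Fin n → ℝ) → (L2Rn n ≃ₗᵢ[ℂ] L2Rn n))
    (hU : ∀ q : Fin n → ℝ, ∀ φ : L2Rn n,
      (U q φ : (Fin n → ℝ) → ℂ) =ᵐ[volume] fun x => φ (x - q))
    (V : (Fin n → ℝ) → (L2Rn n ≃ₗᵢ[ℂ] L2Rn n))
    (hV : ∀ p : Fin n → ℝ, ∀ φ : L2Rn n,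
      (V p φ : (Fin n → ℝ) → ℂ) =ᵐ[volume]
        fun x => Complex.exp (Complex.I * (∑ k, p k * x k)) * φ x) :
    -- (1) every probability measure defines a translation-covariant, boost-invariant POVM
    (∀ ρ : Measure (Fin n → ℝ), IsProbabilityMeasure ρ →
      ∃ M : POVM (Fin n → ℝ) (L2Rn n),
        ConvRel n ρ M ∧ TransCovariant n U M ∧ BoostInvariant n V M) ∧
    -- (2) well-definedness: the prescription determines the POVM uniquely
    (∀ ρ : Measure (Fin n → ℝ), ∀ M M' : POVM (Fin n → ℝ) (L2Rn n),
      ConvRel n ρ M → ConvRel n ρ M' →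
      ∀ B : Set (Fin n → ℝ), MeasurableSet B → M.toFun B = M'.toFun B) ∧
    -- (3) injectivity of `ρ ↦ ρ ∗ M_κ`
    (∀ ρ₁ ρ₂ : Measure (Fin n → ℝ), IsProbabilityMeasure ρ₁ → IsProbabilityMeasure ρ₂ →
      ∀ M : POVM (Fin n → ℝ) (L2Rn n), ConvRel n ρ₁ M → ConvRel n ρ₂ M → ρ₁ = ρ₂) ∧
    -- (4) surjectivity onto `𝔏(ℝⁿ)`
    (∀ M : POVM (Fin n → ℝ) (L2Rn n), TransCovariant n U M → BoostInvariant n V M →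
      ∃ ρ : Measure (Fin n → ℝ), IsProbabilityMeasure ρ ∧ ConvRel n ρ M) ∧
    -- (5) affinity: convex mixtures of measures correspond to convex mixtures of POVMs
    (∀ ρ₁ ρ₂ : Measure (Fin n → ℝ), IsProbabilityMeasure ρ₁ → IsProbabilityMeasure ρ₂ →
      ∀ M₁ M₂ : POVM (Fin n → ℝ) (L2Rn n), ConvRel n ρ₁ M₁ → ConvRel n ρ₂ M₂ →
      ∀ t : ℝ, 0 ≤ t → t ≤ 1 →
      ∀ N : POVM (Fin n → ℝ) (L2Rn n),
        (∀ B : Set (Fin n → ℝ), MeasurableSet B →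
          N.toFun B = (t : ℂ) • M₁.toFun B + ((1 - t : ℝ) : ℂ) • M₂.toFun B) →
        ConvRel n (ENNReal.ofReal t • ρ₁ + ENNReal.ofReal (1 - t) • ρ₂) N) := by
  refine ⟨?_, ?_, ?_, ?_, ?_⟩
  · intro ρ hρ
    exact ⟨convPOVM ρ, (convRel_iff ρ _).2 (fun _ _ => rfl), convPOVM_trans ρ U hU,
      convPOVM_boost ρ V hV⟩
  · intro ρ M M' h h' B hB
    exact clm_ext fun φ ψ => (h B hB φ ψ).trans (h' B hB φ ψ).symm
  · intro ρ₁ ρ₂ h₁ h₂ M hM₁ hM₂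
    exact conv_inj ρ₁ ρ₂ M hM₁ hM₂
  · intro M hT hM
    exact conv_surj U hU V hV M hT hM
  · intro ρ₁ ρ₂ h₁ h₂ M₁ M₂ hM₁ hM₂ t h0 h1 N hN
    exact conv_affine ρ₁ ρ₂ M₁ M₂ hM₁ hM₂ t h0 h1 N hN
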